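/- Let (Ω, F, P) be a probability space, K ≥ 1 an integer, δ ∈ (0,1), and α ∈ ℝ. Let R : Fin K → ℝ be fixed real numbers that are nonincreasing in k (i.e., R k' ≤ R k whenever k ≤ k'), and let E : Fin K → Set Ω be measurable events (the event 'test k passes') such that for every k with R k > α one has P[E k] ≤ δ. Define the fixed-sequence selection: an index k is selected if E j holds for every j ≥ k, and the output index J(ω) is the smallest selected index (when one exists). Then P[{ω : J(ω) exists and R (J(ω)) > α}] ≤ δ. -/

import Mathlib

open MeasureTheory ProbabilityTheory Set

section FixedSequence

variable {Ω ι : Type*} {E : ι → Set Ω} {N : Set ι}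

/-- The event that fixed-sequence testing selects the index `k`: the tests at `k` and at all larger
indices pass. Larger indices are the more conservative ones and are tested first. -/
def selectionEvent [LE ι] (E : ι → Set Ω) (k : ι) : Set Ω :=
  {ω | ∀ j, k ≤ j → ω ∈ E j}

theorem biUnion_selectionEvent_subset_of_mem_upperBounds [LE ι] {m : ι}
    (hm : m ∈ upperBounds N) :
    ⋃ k ∈ N, selectionEvent E k ⊆ E m :=
  iUnion₂_subset fun _ hk _ hω => hω m (hm hk)

-- `N` is the set of true null hypotheses. Every test may spend the whole budget `δ`: selecting any
-- index in `N` forces the first tested index of `N` to pass, so a single event covers all errors.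
theorem stmt1_general [LinearOrder ι] [WellFoundedGT ι] [MeasurableSpace Ω] (P : Measure Ω)
    {δ : ENNReal} (h : ∀ k ∈ N, P (E k) ≤ δ) :
    P (⋃ k ∈ N, selectionEvent E k) ≤ δ := by
  rcases N.eq_empty_or_nonempty with rfl | hN
  · simp
  · obtain ⟨m, hmN, hmax⟩ := wellFounded_gt.has_min N hN
    have hm : m ∈ upperBounds N := fun k hk => not_lt.mp (hmax k hk)
    calc P (⋃ k ∈ N, selectionEvent E k)
        ≤ P (E m) := measure_mono (biUnion_selectionEvent_subset_of_mem_upperBounds hm)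
      _ ≤ δ := h m hmN

end FixedSequence

/-- Learn Then Test fixed-sequence testing guarantee: with true risks `R` nonincreasing
along the grid, each test valid at full level `δ` whenever `R k > α`, selection defined as
"all tests at indices `≥ k` pass", and `J ω` the smallest selected index when one exists,
the probability that a selected index is returned with true risk above `α` is at most `δ`. -/
theorem stmt1 {Ω : Type*} [MeasurableSpace Ω] (P : Measure Ω) [IsProbabilityMeasure P]
    (K : ℕ) (hK : 1 ≤ K) (δ α : ℝ) (hδ : δ ∈ Set.Ioo (0 : ℝ) 1)
    (R : Fin K → ℝ) (hR : ∀ k k' : Fin K, k ≤ k' → R k' ≤ R k)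
    (E : Fin K → Set Ω) (hE : ∀ k, MeasurableSet (E k))
    (h : ∀ k : Fin K, α < R k → P (E k) ≤ ENNReal.ofReal δ)
    (J : Ω → Fin K)
    (hJ : ∀ ω, (∃ k : Fin K, ∀ j : Fin K, k ≤ j → ω ∈ E j) →
      ((∀ j : Fin K, J ω ≤ j → ω ∈ E j) ∧
        ∀ k : Fin K, (∀ j : Fin K, k ≤ j → ω ∈ E j) → J ω ≤ k)) :
    P {ω | (∃ k : Fin K, ∀ j : Fin K, k ≤ j → ω ∈ E j) ∧ α < R (J ω)} ≤
      ENNReal.ofReal δ := by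
  refine (measure_mono ?_).trans (stmt1_general (N := {k | α < R k}) P h)
  exact fun ω ⟨hselected, hrisk⟩ => mem_biUnion hrisk (hJ ω hselected).1
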